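/- arXiv:1908.00649 — 2 statements merged into one kernel-verified Lean document; each statement's English description precedes it below -/
import Mathlib

section
/- Let G be a Grothendieck category, E an injective cogenerator of G, and P a finitely presented object. The following are equivalent: (1) Ext¹(P,-) : G → Ab preserves direct limits; (2) Ext¹(P,-) vanishes on direct limits of objects in Prod(E); (3) Ext¹(P,-) vanishes on direct limits of injective objects. -/
/-!
STATEMENT 4: Let `G` be a Grothendieck category, `E` an injective cogenerator
of `G`, and `P` a finitely presented object.  The following are equivalent:
(1) `Ext¹(P,-) : G → Ab` preserves direct limits;
(2) `Ext¹(P,-)` vanishes on direct limits of objects in `Prod(E)`;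
(3) `Ext¹(P,-)` vanishes on direct limits of injective objects.

"`Ext¹(P,-)` preserves direct limits" is encoded element-wise: for every
filtered system `(Y_i)` with colimit `Y`, the canonical map
`colim Ext¹(P,Y_i) → Ext¹(P,Y)` is bijective, i.e. every class over `Y` comes
from some stage and every class dying in `Y` dies at some later stage.
-/

open CategoryTheory Limits Opposite Abelian

universe w v u

variable {C : Type u} [Category.{v} C]

/-- `Hom(X, -)` preserves filtered colimits. -/
def FinitelyPresented (X : C) : Prop :=
  ∀ (J : Type v) [SmallCategory J] [IsFiltered J] (D : J ⥤ C) (c : Cocone D),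
    Nonempty (IsColimit c) →
      Nonempty (IsColimit ((coyoneda.obj (op X)).mapCocone c))

/-- `X` is a direct summand of a product of copies of `E`. -/
def InProdClass [HasLimits C] (E X : C) : Prop :=
  ∃ (ι : Type v) (s : X ⟶ ∏ᶜ (fun _ : ι => E)) (r : (∏ᶜ (fun _ : ι => E)) ⟶ X),
    s ≫ r = 𝟙 X

section
variable [Abelian C] [HasExt.{w} C]

/-- The canonical map `colim Ext¹(P, Y_i) → Ext¹(P, colim Y_i)` is bijective for
every filtered system, expressed element-wise. -/
def Ext1PreservesDirectLimits (P : C) : Prop :=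
  ∀ (J : Type v) [SmallCategory J] [IsFiltered J] (D : J ⥤ C)
    (c : Cocone D), IsColimit c →
    ((∀ (i : J) (e : Ext P (D.obj i) 1),
        e.comp (Ext.mk₀ (c.ι.app i)) (add_zero 1) = 0 →
        ∃ (j : J) (φ : i ⟶ j), e.comp (Ext.mk₀ (D.map φ)) (add_zero 1) = 0) ∧
      (∀ e : Ext P c.pt 1, ∃ (i : J) (e' : Ext P (D.obj i) 1),
        e'.comp (Ext.mk₀ (c.ι.app i)) (add_zero 1) = e))

/-- `Ext¹(P,-)` vanishes on direct limits of objects satisfying `Q`. -/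
def Ext1VanishesOnDirectLimitsOf (Q : C → Prop) (P : C) : Prop :=
  ∀ (J : Type v) [SmallCategory J] [IsFiltered J] (D : J ⥤ C),
    (∀ j : J, Q (D.obj j)) →
    ∀ (c : Cocone D), IsColimit c →
    ∀ e : Ext P c.pt 1, e = 0

end

/-!
The substantial implication is (2) ⇒ (1). Embed a filtered system `D` functorially into a system `I`
of products of copies of `E`, with quotient `Q`. By (2), `Ext¹(P, -)` vanishes on each `I j` and on
`colim I`, and AB5 keeps `0 → D → I → Q → 0` exact in the colimit. So `Ext¹(P, -)` of `D` is the
cokernel of `Hom(P, I) → Hom(P, Q)`, at every stage and in the colimit, and `Hom(P, -)` commutes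
with the colimits of `I` and `Q`.
-/

lemma FinitelyPresented.isFinitelyPresentable {P : C} (hP : FinitelyPresented P) :
    IsFinitelyPresentable.{v} P :=
  isFinitelyPresentable_iff_preservesFilteredColimits.2
    ⟨fun J _ _ => ⟨fun {D} => ⟨fun {c} hc => hP J D c ⟨hc⟩⟩⟩⟩

namespace InProdClass

variable [HasLimits C] {E X : C}

lemma injective [Injective E] (h : InProdClass E X) : Injective X := by
  obtain ⟨ι, s, r, hsr⟩ := h
  exact Retract.injective ⟨s, r, hsr⟩

lemma of_product (ι : Type v) : InProdClass E (∏ᶜ fun _ : ι => E) :=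
  ⟨ι, 𝟙 _, 𝟙 _, Category.id_comp _⟩

end InProdClass

section HomPower

variable (E : C) [∀ X : C, HasProduct fun _ : X ⟶ E => E]

/-- The functor `X ↦ E ^ Hom(X, E)`, the target of a functorial embedding of every object into a
product of copies of a coseparator `E`. -/
noncomputable def homPower : C ⥤ C where
  obj X := ∏ᶜ fun _ : X ⟶ E => E
  map f := Pi.lift fun h => Pi.π (fun _ => E) (f ≫ h)

/-- The evaluation `X ⟶ E ^ Hom(X, E)`, as a natural transformation. -/
noncomputable def toHomPower : 𝟭 C ⟶ homPower E where
  app X := Pi.lift fun h => h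
  naturality X Y f := Pi.hom_ext _ _ fun h => by simp [homPower]

end HomPower

section ExtColimit

variable [Abelian C] [HasExt.{w} C] {J : Type*} [Category* J]

section Defs

variable (P : C) (n : ℕ) {D : J ⥤ C} (c : Cocone D)

/-- Injectivity of the canonical map `colim Extⁿ(P, D i) ⟶ Extⁿ(P, c.pt)` for filtered `J`: a class
dying in `c.pt` dies at some stage. -/
def ExtColimitInjective : Prop :=
  ∀ (i : J) (e : Ext P (D.obj i) n), e.comp (Ext.mk₀ (c.ι.app i)) (add_zero n) = 0 →
    ∃ (j : J) (φ : i ⟶ j), e.comp (Ext.mk₀ (D.map φ)) (add_zero n) = 0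

/-- Surjectivity of the canonical map `colim Extⁿ(P, D i) ⟶ Extⁿ(P, c.pt)`: every class over `c.pt`
comes from some stage. -/
def ExtColimitSurjective : Prop :=
  ∀ e : Ext P c.pt n, ∃ (i : J) (e' : Ext P (D.obj i) n),
    e'.comp (Ext.mk₀ (c.ι.app i)) (add_zero n) = e

end Defs

variable {P : C} {n m : ℕ}

lemma ext_comp_mk₀_comp_mk₀ {X Y Z : C} (e : Ext P X n) (f : X ⟶ Y) (g : Y ⟶ Z) :
    (e.comp (Ext.mk₀ f) (add_zero n)).comp (Ext.mk₀ g) (add_zero n) =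
      e.comp (Ext.mk₀ (f ≫ g)) (add_zero n) := by
  rw [Ext.comp_assoc_of_third_deg_zero, Ext.mk₀_comp_mk₀]

lemma ext_comp_extClass_naturality {S T : ShortComplex C} (hS : S.ShortExact) (hT : T.ShortExact)
    (φ : S ⟶ T) (x : Ext P S.X₃ n) (h : n + 1 = m) :
    (x.comp hS.extClass h).comp (Ext.mk₀ φ.τ₁) (add_zero m) =
      (x.comp (Ext.mk₀ φ.τ₃) (add_zero n)).comp hT.extClass h := by
  rw [Ext.comp_assoc_of_third_deg_zero, ShortComplex.ShortExact.extClass_naturality hS hT φ,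
    Ext.comp_assoc_of_second_deg_zero]

lemma ext_comp_g_naturality {S T : ShortComplex C} (φ : S ⟶ T) (x : Ext P S.X₂ n) :
    (x.comp (Ext.mk₀ S.g) (add_zero n)).comp (Ext.mk₀ φ.τ₃) (add_zero n) =
      (x.comp (Ext.mk₀ φ.τ₂) (add_zero n)).comp (Ext.mk₀ T.g) (add_zero n) := by
  rw [ext_comp_mk₀_comp_mk₀, ext_comp_mk₀_comp_mk₀, φ.comm₂₃]

lemma ext_comp_g_comp_extClass {S : ShortComplex C} (hS : S.ShortExact) (x : Ext P S.X₂ n)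
    (h : n + 1 = m) :
    (x.comp (Ext.mk₀ S.g) (add_zero n)).comp hS.extClass h = 0 := by
  rw [Ext.comp_assoc_of_second_deg_zero, hS.comp_extClass, Ext.comp_zero]

lemma ExtColimitInjective.exists_comp_map_eq [IsFiltered J] {D : J ⥤ C} {c : Cocone D}
    (hc : ExtColimitInjective P n c) {i j : J} (x : Ext P (D.obj i) n) (y : Ext P (D.obj j) n)
    (hxy : x.comp (Ext.mk₀ (c.ι.app i)) (add_zero n) =
      y.comp (Ext.mk₀ (c.ι.app j)) (add_zero n)) :
    ∃ (k : J) (a : i ⟶ k) (b : j ⟶ k),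
      x.comp (Ext.mk₀ (D.map a)) (add_zero n) = y.comp (Ext.mk₀ (D.map b)) (add_zero n) := by
  let a := IsFiltered.leftToMax i j
  let b := IsFiltered.rightToMax i j
  obtain ⟨k, φ, hφ⟩ := hc _
    (x.comp (Ext.mk₀ (D.map a)) (add_zero n) - y.comp (Ext.mk₀ (D.map b)) (add_zero n)) (by
      simp only [sub_eq_add_neg, Ext.add_comp, Ext.neg_comp, ext_comp_mk₀_comp_mk₀, c.w, hxy,
        add_neg_cancel])
  refine ⟨k, a ≫ φ, b ≫ φ, ?_⟩
  simpa only [sub_eq_add_neg, Ext.add_comp, Ext.neg_comp, ext_comp_mk₀_comp_mk₀, ← D.map_comp,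
    add_neg_eq_zero] using hφ

section DimensionShift

variable {K : J ⥤ ShortComplex C} (hK : ∀ j, (K.obj j).ShortExact) {c : Cocone K}
  (hc : c.pt.ShortExact)

include hK hc

lemma ExtColimitSurjective.of_shortExact (h : n + 1 = m)
    (hX₂ : Subsingleton (Ext P c.pt.X₂ m))
    (h₃ : ExtColimitSurjective P n (ShortComplex.π₃.mapCocone c)) :
    ExtColimitSurjective P m (ShortComplex.π₁.mapCocone c) := by
  intro e
  obtain ⟨x, rfl⟩ := Ext.covariant_sequence_exact₁ P hc e (hX₂.elim _ _) h
  obtain ⟨i, x, rfl⟩ := h₃ x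
  exact ⟨i, x.comp (hK i).extClass h, ext_comp_extClass_naturality (hK i) hc (c.ι.app i) x h⟩

lemma ExtColimitInjective.of_shortExact [IsFiltered J] (h : n + 1 = m)
    (hX₂ : ∀ j, Subsingleton (Ext P (K.obj j).X₂ m))
    (h₂ : ExtColimitSurjective P n (ShortComplex.π₂.mapCocone c))
    (h₃ : ExtColimitInjective P n (ShortComplex.π₃.mapCocone c)) :
    ExtColimitInjective P m (ShortComplex.π₁.mapCocone c) := by
  intro i e he
  obtain ⟨x, rfl⟩ := Ext.covariant_sequence_exact₁ P (hK i) e ((hX₂ i).elim _ _) h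
  have hx : (x.comp (Ext.mk₀ (c.ι.app i).τ₃) (add_zero n)).comp hc.extClass h = 0 :=
    (ext_comp_extClass_naturality (hK i) hc (c.ι.app i) x h).symm.trans he
  obtain ⟨y, hy⟩ := Ext.covariant_sequence_exact₃ P hc _ h hx
  obtain ⟨j, y : Ext P (K.obj j).X₂ n, rfl⟩ := h₂ y
  obtain ⟨k, a, b, hk⟩ := h₃.exists_comp_map_eq x (y.comp (Ext.mk₀ (K.obj j).g) (add_zero n))
    (hy.symm.trans (ext_comp_g_naturality (c.ι.app j) y).symm)
  refine ⟨k, a, ?_⟩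
  calc (x.comp (hK i).extClass h).comp (Ext.mk₀ (K.map a).τ₁) (add_zero m)
      = (x.comp (Ext.mk₀ (K.map a).τ₃) (add_zero n)).comp (hK k).extClass h :=
        ext_comp_extClass_naturality (hK i) (hK k) (K.map a) x h
    _ = ((y.comp (Ext.mk₀ (K.obj j).g) (add_zero n)).comp
          (Ext.mk₀ (K.map b).τ₃) (add_zero n)).comp (hK k).extClass h :=
        congrArg (fun z => z.comp (hK k).extClass h) hk
    _ = ((y.comp (Ext.mk₀ (K.map b).τ₂) (add_zero n)).comp
          (Ext.mk₀ (K.obj k).g) (add_zero n)).comp (hK k).extClass h := by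
        rw [ext_comp_g_naturality]
    _ = 0 := ext_comp_g_comp_extClass (hK k) _ h

end DimensionShift

end ExtColimit

section FinitelyPresentable

universe w'

variable [Abelian C] [HasExt.{w} C] {P : C} [IsFinitelyPresentable.{w'} P]
  {J : Type w'} [SmallCategory J] [IsFiltered J] {D : J ⥤ C} {c : Cocone D} (hc : IsColimit c)

include hc

lemma extColimitSurjective_zero : ExtColimitSurjective P 0 c := by
  intro e
  obtain ⟨f, rfl⟩ := (Ext.mk₀_bijective _ _).2 e
  obtain ⟨i, g, rfl⟩ := IsFinitelyPresentable.exists_hom_of_isColimit hc f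
  exact ⟨i, Ext.mk₀ g, Ext.mk₀_comp_mk₀ _ _⟩

lemma extColimitInjective_zero : ExtColimitInjective P 0 c := by
  intro i e he
  obtain ⟨f, rfl⟩ := (Ext.mk₀_bijective _ _).2 e
  rw [Ext.mk₀_comp_mk₀, Ext.mk₀_eq_zero_iff] at he
  obtain ⟨k, a, b, hab⟩ := IsFinitelyPresentable.exists_eq_of_isColimit hc f (0 : P ⟶ D.obj i)
    (by rw [he, zero_comp])
  exact ⟨k, a, by rw [Ext.mk₀_comp_mk₀, hab, zero_comp, Ext.mk₀_zero]⟩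

end FinitelyPresentable

section ShortExactColimit

variable {J : Type*} [Category* J]

/-- The cocone of short complexes formed by colimit cocones over the three terms of a short complex
of functors. -/
def shortComplexCocone [HasZeroMorphisms C] (S : ShortComplex (J ⥤ C)) {c₁ : Cocone S.X₁}
    (hc₁ : IsColimit c₁) {c₂ : Cocone S.X₂} (hc₂ : IsColimit c₂) (c₃ : Cocone S.X₃) :
    Cocone ((ShortComplex.functorEquivalence J C).functor.obj S) where
  pt := colim.mapShortComplex S hc₁ c₂ c₃ (hc₁.map c₂ S.f) (hc₂.map c₃ S.g)
    (hc₁.ι_map c₂ S.f) (hc₂.ι_map c₃ S.g)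
  ι :=
    { app j := ShortComplex.homMk (c₁.ι.app j) (c₂.ι.app j) (c₃.ι.app j)
        (hc₁.ι_map c₂ S.f j) (hc₂.ι_map c₃ S.g j)
      naturality _ _ φ := by
        ext
        exacts [c₁.ι.naturality φ, c₂.ι.naturality φ, c₃.ι.naturality φ] }

variable [Abelian C]

lemma shortExact_shortComplexCocone_pt [HasColimitsOfShape J C] [HasExactColimitsOfShape J C]
    {S : ShortComplex (J ⥤ C)} (hS : S.ShortExact) {c₁ : Cocone S.X₁} (hc₁ : IsColimit c₁)
    {c₂ : Cocone S.X₂} (hc₂ : IsColimit c₂) {c₃ : Cocone S.X₃} (hc₃ : IsColimit c₃) :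
    (shortComplexCocone S hc₁ hc₂ c₃).pt.ShortExact where
  exact := colim.exact_mapShortComplex hS.exact hc₁ hc₂ hc₃ _ _
    (hc₁.ι_map c₂ S.f) (hc₂.ι_map c₃ S.g)
  mono_f :=
    have := hS.mono_f
    colim.map_mono' S.f hc₁ hc₂ _ (hc₁.ι_map c₂ S.f)
  epi_g :=
    have := hS.epi_g
    colim.map_epi' S.g c₂ hc₃ _ (hc₂.ι_map c₃ S.g)

lemma shortExact_cokernel {A : Type*} [Category* A] [Abelian A] {X Y : A} (f : X ⟶ Y) [Mono f] :
    (ShortComplex.mk f (cokernel.π f) (cokernel.condition f)).ShortExact where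
  exact := ShortComplex.exact_cokernel f

end ShortExactColimit

section Ext1

variable [Abelian C] [HasExt.{w} C] {P : C}

section Embedding

universe w'

variable [IsFinitelyPresentable.{w'} P] {J : Type w'} [SmallCategory J] [IsFiltered J]
  [HasColimitsOfShape J C] [HasExactColimitsOfShape J C] {D I : J ⥤ C} (ι : D ⟶ I) [Mono ι]
  {c : Cocone D} (hc : IsColimit c)

include ι hc

lemma extColimitSurjective_one_of_mono (hI : Subsingleton (Ext P (colimit I) 1)) :
    ExtColimitSurjective P 1 c :=
  have hS := shortExact_cokernel ι
  ExtColimitSurjective.of_shortExact (fun j => hS.map_of_exact ((evaluation J C).obj j))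
    (shortExact_shortComplexCocone_pt hS hc (colimit.isColimit I) (colimit.isColimit _))
    (zero_add 1) hI (extColimitSurjective_zero (colimit.isColimit _))

lemma extColimitInjective_one_of_mono (hI : ∀ j, Subsingleton (Ext P (I.obj j) 1)) :
    ExtColimitInjective P 1 c :=
  have hS := shortExact_cokernel ι
  ExtColimitInjective.of_shortExact (fun j => hS.map_of_exact ((evaluation J C).obj j))
    (shortExact_shortComplexCocone_pt hS hc (colimit.isColimit I) (colimit.isColimit _))
    (zero_add 1) hI (extColimitSurjective_zero (colimit.isColimit I))
    (extColimitInjective_zero (colimit.isColimit _))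

end Embedding

lemma Ext1PreservesDirectLimits.vanishesOnDirectLimitsOf (h : Ext1PreservesDirectLimits.{w} P)
    {Q : C → Prop} (hQ : ∀ X, Q X → Subsingleton (Ext P X 1)) :
    Ext1VanishesOnDirectLimitsOf.{w} Q P := by
  intro J _ _ D hD c hc e
  obtain ⟨i, e', rfl⟩ := (h J D c hc).2 e
  have := hQ _ (hD i)
  rw [Subsingleton.elim e' 0, Ext.zero_comp]

lemma Ext1VanishesOnDirectLimitsOf.mono {Q R : C → Prop}
    (h : Ext1VanishesOnDirectLimitsOf.{w} R P) (hQR : ∀ X, Q X → R X) :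
    Ext1VanishesOnDirectLimitsOf.{w} Q P :=
  fun J _ _ D hD => h J D fun j => hQR _ (hD j)

lemma Ext1VanishesOnDirectLimitsOf.subsingleton_ext {Q : C → Prop}
    (h : Ext1VanishesOnDirectLimitsOf.{w} Q P) {X : C} (hX : Q X) : Subsingleton (Ext P X 1) :=
  subsingleton_of_forall_eq 0 <| h (Discrete PUnit.{v + 1}) ((Functor.const _).obj X)
    (fun _ => hX) (constCocone _ X) (isColimitConstCocone _ X)

lemma Ext1VanishesOnDirectLimitsOf.preservesDirectLimits [HasFilteredColimits C] [AB5 C]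
    [IsFinitelyPresentable.{v} P] {Q : C → Prop} (h : Ext1VanishesOnDirectLimitsOf.{w} Q P)
    {F : C ⥤ C} (η : 𝟭 C ⟶ F) (hη : ∀ X, Mono (η.app X)) (hF : ∀ X, Q (F.obj X)) :
    Ext1PreservesDirectLimits.{w} P := by
  intro J _ _ D c hc
  let ι : D ⟶ D ⋙ F := Functor.whiskerLeft D η
  have (j : J) : Mono (ι.app j) := hη (D.obj j)
  have : Mono ι := NatTrans.mono_of_mono_app ι
  have hcolim : Subsingleton (Ext P (colimit (D ⋙ F)) 1) :=
    subsingleton_of_forall_eq 0 (h J (D ⋙ F) (fun j => hF _) _ (colimit.isColimit _))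
  exact ⟨extColimitInjective_one_of_mono ι hc fun j => h.subsingleton_ext (hF (D.obj j)),
    extColimitSurjective_one_of_mono ι hc hcolim⟩

end Ext1

theorem ext1_preserves_directLimits_tfae_general
    [Abelian C] [HasColimits C] [HasLimits C] [AB5 C] [HasExt.{w} C]
    (E : C) (hEinj : CategoryTheory.Injective E) (hEcog : IsCoseparator E)
    (P : C) (hP : FinitelyPresented P) :
    List.TFAE
      [ Ext1PreservesDirectLimits.{w} P,
        Ext1VanishesOnDirectLimitsOf.{w} (InProdClass E) P,
        Ext1VanishesOnDirectLimitsOf.{w} (fun X => CategoryTheory.Injective X) P ] := by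
  have := hP.isFinitelyPresentable
  tfae_have 1 → 3 := fun h =>
    h.vanishesOnDirectLimitsOf fun X _ => Ext.subsingleton_of_injective P X 0
  tfae_have 3 → 2 := fun h => h.mono fun _ hX => hX.injective
  tfae_have 2 → 1 := fun h =>
    h.preservesDirectLimits (toHomPower E) ((isCoseparator_iff_mono E).1 hEcog)
      fun X => .of_product (X ⟶ E)
  tfae_finish

theorem ext1_preserves_directLimits_tfae
    [Abelian C] [HasColimits C] [HasLimits C] [AB5 C] [HasExt.{w} C]
    (hsep : ∃ G : C, IsSeparator G)
    (E : C) (hEinj : CategoryTheory.Injective E) (hEcog : IsCoseparator E)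
    (P : C) (hP : FinitelyPresented P) :
    List.TFAE
      [ Ext1PreservesDirectLimits.{w} P,
        Ext1VanishesOnDirectLimitsOf.{w} (InProdClass E) P,
        Ext1VanishesOnDirectLimitsOf.{w} (fun X => CategoryTheory.Injective X) P ] :=
  ext1_preserves_directLimits_tfae_general E hEinj hEcog P hP
end

section
/- Let G be a Grothendieck category and t = (T, F) a torsion pair of finite type in G. If M is an object such that (i) Hom(M,-) preserves direct limits of objects in T, (ii) Hom(M,-) restricted to F preserves direct limits, and (iii) for each direct system (T_i) in T the canonical map colim Ext¹(M,T_i) → Ext¹(M, colim T_i) is a monomorphism, then M is finitely presented. -/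
/-!
STATEMENT 8: Let `G` be a Grothendieck category and `t = (T, F)` a torsion
pair of finite type in `G`.  If `M` is an object such that
(i) `Hom(M,-)` preserves direct limits of objects in `T`,
(ii) `Hom(M,-)` restricted to `F` preserves direct limits, and
(iii) for each direct system `(T_i)` in `T` the canonical map
`colim Ext¹(M,T_i) → Ext¹(M, colim T_i)` is a monomorphism (encoded
element-wise), then `M` is finitely presented.
-/

open CategoryTheory Limits Opposite Abelian

universe w v u

variable {C : Type u} [Category.{v} C]

/-- A torsion pair on an abelian category, as a pair of classes of objects. -/
structure IsTorsionPair [Abelian C] (T F : C → Prop) : Prop where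
  torsion_iff : ∀ X : C, T X ↔ ∀ (Y : C), F Y → ∀ f : X ⟶ Y, f = 0
  torsionFree_iff : ∀ Y : C, F Y ↔ ∀ (X : C), T X → ∀ f : X ⟶ Y, f = 0
  exists_seq : ∀ X : C, ∃ (A B : C) (i : A ⟶ X) (p : X ⟶ B) (w : i ≫ p = 0),
    T A ∧ F B ∧ (ShortComplex.mk i p w).ShortExact

/-- A class of objects is closed under direct (filtered) limits. -/
def ClosedUnderDirectLimits (P : C → Prop) : Prop :=
  ∀ (J : Type v) [SmallCategory J] [IsFiltered J] (D : J ⥤ C),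
    (∀ j : J, P (D.obj j)) →
    ∀ (c : Cocone D), IsColimit c → P c.pt

/-- `Hom(X,-)` preserves direct limits of systems of objects in the class `P`. -/
def HomPreservesDirectLimitsOf (P : C → Prop) (X : C) : Prop :=
  ∀ (J : Type v) [SmallCategory J] [IsFiltered J] (D : J ⥤ C),
    (∀ j : J, P (D.obj j)) →
    ∀ (c : Cocone D), IsColimit c →
      Nonempty (IsColimit ((coyoneda.obj (op X)).mapCocone c))

/-!
The torsion radical `t` and coradical `(1:t)` turn a filtered diagram `D` into a short exact
sequence of diagrams `0 ⟶ tD ⟶ D ⟶ (1:t)D ⟶ 0`, which stays exact in the colimit. Applying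
`Hom(M, -)` before or after passing to the colimit yields two exact sequences of the form
`0 ⟶ Hom(M, tD) ⟶ Hom(M, D) ⟶ Hom(M, (1:t)D) ⟶ Ext¹(M, tD)`. The comparison map between them is
bijective at the torsion and torsion-free terms and injective at `Ext¹`, so by the five lemma it
is bijective at `Hom(M, D)`.
-/

section ShortComplex

lemma shortExact_of_shortExact_evaluation [Abelian C] {J : Type*} [Category* J]
    {S : ShortComplex (J ⥤ C)} (hS : ∀ j, (S.map ((evaluation J C).obj j)).ShortExact) :
    S.ShortExact :=
  have h : JointlyReflectIsomorphisms (evaluation J C).obj :=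
    ⟨fun f h ↦ (NatTrans.isIso_iff_isIso_app f).2 h⟩
  (h.shortExact_iff S).2 hS

lemma shortComplex_hom_ext_of_τ₂ [HasZeroMorphisms C] {S₁ S₂ : ShortComplex C} [Epi S₁.g]
    [Mono S₂.f] {φ ψ : S₁ ⟶ S₂} (h : φ.τ₂ = ψ.τ₂) : φ = ψ :=
  ShortComplex.hom_ext _ _
    (by simp only [← cancel_mono S₂.f, ShortComplex.Hom.comm₁₂, h]) h
    (by simp only [← cancel_epi S₁.g, ← ShortComplex.Hom.comm₂₃, h])

/-- The unique morphism of short exact sequences with middle component `f`, which makes torsion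
sequences functorial. -/
noncomputable def shortComplexHomOfMiddle [Abelian C] {S₁ S₂ : ShortComplex C}
    (h₁ : S₁.ShortExact) (h₂ : S₂.ShortExact) (f : S₁.X₂ ⟶ S₂.X₂) (w : S₁.f ≫ f ≫ S₂.g = 0) :
    S₁ ⟶ S₂ :=
  have := h₁.epi_g
  have := h₂.mono_f
  ShortComplex.homMk (h₂.exact.lift (S₁.f ≫ f) (by rw [Category.assoc, w])) f
    (h₁.exact.desc (f ≫ S₂.g) w) (h₂.exact.lift_f _ _) (h₁.exact.g_desc _ _).symm

end ShortComplex

section Ext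

variable [Abelian C] [HasExt.{w} C] {M : C}

lemma mk₀_comp_extClass_eq_zero_iff {S : ShortComplex C} (hS : S.ShortExact) (g : M ⟶ S.X₃) :
    (Ext.mk₀ g).comp hS.extClass (zero_add 1) = 0 ↔ ∃ f : M ⟶ S.X₂, f ≫ S.g = g := by
  refine ⟨fun h ↦ ?_, ?_⟩
  · obtain ⟨x, hx⟩ := Ext.covariant_sequence_exact₃ _ hS _ _ h
    obtain ⟨f, rfl⟩ := (Ext.mk₀_bijective _ _).2 x
    exact ⟨f, (Ext.mk₀_bijective _ _).1 (by rw [← hx, Ext.mk₀_comp_mk₀])⟩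
  · rintro ⟨f, rfl⟩
    rw [← Ext.mk₀_comp_mk₀, Ext.comp_assoc_of_second_deg_zero, hS.comp_extClass, Ext.comp_zero]

lemma mk₀_comp_extClass_comp_mk₀_eq_zero_iff {S₁ S₂ : ShortComplex C} (h₁ : S₁.ShortExact)
    (h₂ : S₂.ShortExact) (τ : S₁ ⟶ S₂) (g : M ⟶ S₁.X₃) :
    ((Ext.mk₀ g).comp h₁.extClass (zero_add 1)).comp (Ext.mk₀ τ.τ₁) (add_zero 1) = 0 ↔
      ∃ f : M ⟶ S₂.X₂, f ≫ S₂.g = g ≫ τ.τ₃ := by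
  rw [Ext.comp_assoc_of_third_deg_zero, h₁.extClass_naturality h₂ τ,
    ← Ext.comp_assoc_of_second_deg_zero, Ext.mk₀_comp_mk₀, mk₀_comp_extClass_eq_zero_iff]

/-- The canonical map `colim Extⁿ(M, D j) ⟶ Extⁿ(M, c.pt)` of a filtered diagram `D` with cocone
`c` is a monomorphism, encoded elementwise: a class killed in `c.pt` is killed at some stage. For
`n = 1` it controls the obstructions to lifting morphisms out of `M`. -/
def ExtColimitMapInjective (M : C) (n : ℕ) {J : Type*} [Category* J] {D : J ⥤ C}
    (c : Cocone D) : Prop :=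
  ∀ (i : J) (e : Ext M (D.obj i) n), e.comp (Ext.mk₀ (c.ι.app i)) (add_zero n) = 0 →
    ∃ (j : J) (φ : i ⟶ j), e.comp (Ext.mk₀ (D.map φ)) (add_zero n) = 0

end Ext

section FilteredColimit

variable {J : Type*} [Category* J] {M : C}

lemma preservesColimit_coyoneda_of_exists [IsFiltered J] [Preadditive C] {D : J ⥤ C}
    {c : Cocone D} (hc : IsColimit c)
    (hsurj : ∀ f : M ⟶ c.pt, ∃ (j : J) (g : M ⟶ D.obj j), g ≫ c.ι.app j = f)
    (hinj : ∀ (j : J) (f : M ⟶ D.obj j), f ≫ c.ι.app j = 0 →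
      ∃ (k : J) (φ : j ⟶ k), f ≫ D.map φ = 0) :
    PreservesColimit D (coyoneda.obj (op M)) := by
  refine preservesColimit_of_preserves_colimit_cocone hc <|
    Types.FilteredColimit.isColimitOf' _ _ (fun f ↦ ?_) fun j (f g : M ⟶ D.obj j) h ↦ ?_
  · obtain ⟨j, g, hg⟩ := hsurj f
    exact ⟨j, g, hg.symm⟩
  · obtain ⟨k, φ, hφ⟩ := hinj j (f - g) (by rw [Preadditive.sub_comp, sub_eq_zero]; exact h)
    exact ⟨k, φ, by rwa [Preadditive.sub_comp, sub_eq_zero] at hφ⟩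

lemma exists_comp_map_eq_zero_of_preservesColimit_coyoneda [IsFiltered J] [HasZeroMorphisms C]
    {D : J ⥤ C} {c : Cocone D} (hc : IsColimit c) [PreservesColimit D (coyoneda.obj (op M))]
    {j : J} (f : M ⟶ D.obj j) (hf : f ≫ c.ι.app j = 0) :
    ∃ (k : J) (φ : j ⟶ k), f ≫ D.map φ = 0 := by
  obtain ⟨k, φ, hφ⟩ := exists_eq_of_preservesColimit_coyoneda_self hc f 0 (by rw [hf, zero_comp])
  exact ⟨k, φ, by rw [hφ, zero_comp]⟩

variable [Abelian C] [HasColimitsOfShape J C] [HasExactColimitsOfShape J C]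
  {S : ShortComplex (J ⥤ C)}

lemma exists_comp_map_eq_zero_of_shortExact [IsFiltered J] (hS : S.ShortExact)
    [PreservesColimit S.X₁ (coyoneda.obj (op M))] [PreservesColimit S.X₃ (coyoneda.obj (op M))]
    {i : J} (f : M ⟶ S.X₂.obj i) (hf : f ≫ colimit.ι S.X₂ i = 0) :
    ∃ (k : J) (φ : i ⟶ k), f ≫ S.X₂.map φ = 0 := by
  have hmono : Mono (colimMap S.f) := (hS.map_of_exact colim).mono_f
  obtain ⟨j, φ, hφ⟩ : ∃ (j : J) (φ : i ⟶ j), (f ≫ S.g.app i) ≫ S.X₃.map φ = 0 :=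
    exists_comp_map_eq_zero_of_preservesColimit_coyoneda (colimit.isColimit S.X₃) _
      (by simp [← ι_colimMap, reassoc_of% hf])
  have hSj := hS.map_of_exact ((evaluation J C).obj j)
  have := hSj.mono_f
  have hfφ : (f ≫ S.X₂.map φ) ≫ S.g.app j = 0 := by simpa using hφ
  obtain ⟨g, hg⟩ : ∃ g : M ⟶ S.X₁.obj j, g ≫ S.f.app j = f ≫ S.X₂.map φ :=
    ⟨hSj.exact.lift _ hfφ, hSj.exact.lift_f _ _⟩
  obtain ⟨k, ψ, hψ⟩ : ∃ (k : J) (ψ : j ⟶ k), g ≫ S.X₁.map ψ = 0 :=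
    exists_comp_map_eq_zero_of_preservesColimit_coyoneda (colimit.isColimit S.X₁) g
      (by simp [← cancel_mono (colimMap S.f), reassoc_of% hg, hf])
  exact ⟨k, φ ≫ ψ, by
    rw [S.X₂.map_comp, ← reassoc_of% hg, ← S.f.naturality, reassoc_of% hψ, zero_comp]⟩

variable [HasExt.{w} C]

lemma exists_comp_ι_comp_colimMap_eq (hS : S.ShortExact)
    [PreservesColimit S.X₃ (coyoneda.obj (op M))]
    (hExt : ExtColimitMapInjective M 1 (colimit.cocone S.X₁)) (f : M ⟶ colimit S.X₂) :
    ∃ (j : J) (l : M ⟶ S.X₂.obj j), (l ≫ colimit.ι S.X₂ j) ≫ colimMap S.g = f ≫ colimMap S.g := by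
  have hSev (j : J) := hS.map_of_exact ((evaluation J C).obj j)
  obtain ⟨i, g, hg⟩ : ∃ (i : J) (g : M ⟶ S.X₃.obj i), g ≫ colimit.ι S.X₃ i = f ≫ colimMap S.g :=
    exists_hom_of_preservesColimit_coyoneda (colimit.isColimit S.X₃) _
  -- The obstruction in `Ext¹` to lifting `g` dies in the colimit, where `f` is a lift.
  obtain ⟨j, φ, hφ⟩ := hExt i ((Ext.mk₀ g).comp (hSev i).extClass (zero_add 1)) <|
    (mk₀_comp_extClass_comp_mk₀_eq_zero_iff (hSev i) (hS.map_of_exact colim)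
      (S.mapNatTrans (colim.ι i)) g).2 ⟨f, hg.symm⟩
  obtain ⟨l, hl⟩ : ∃ l : M ⟶ S.X₂.obj j, l ≫ S.g.app j = g ≫ S.X₃.map φ :=
    (mk₀_comp_extClass_comp_mk₀_eq_zero_iff (hSev i) (hSev j)
      (S.mapNatTrans ((evaluation J C).map φ)) g).1 hφ
  exact ⟨j, l, by rw [Category.assoc, ι_colimMap, reassoc_of% hl, colimit.w, hg]⟩

variable [IsFiltered J]

lemma exists_comp_ι_eq_of_shortExact (hS : S.ShortExact)
    [PreservesColimit S.X₁ (coyoneda.obj (op M))] [PreservesColimit S.X₃ (coyoneda.obj (op M))]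
    (hExt : ExtColimitMapInjective M 1 (colimit.cocone S.X₁)) (f : M ⟶ colimit S.X₂) :
    ∃ (j : J) (g : M ⟶ S.X₂.obj j), g ≫ colimit.ι S.X₂ j = f := by
  obtain ⟨j, l, hl⟩ := exists_comp_ι_comp_colimMap_eq hS hExt f
  have hSc := hS.map_of_exact (colim (J := J) (C := C))
  have := hSc.mono_f
  have hfl : (f - l ≫ colimit.ι S.X₂ j) ≫ colimMap S.g = 0 := by
    rw [Preadditive.sub_comp, hl, sub_self]
  obtain ⟨d, hd⟩ : ∃ d : M ⟶ colimit S.X₁, d ≫ colimMap S.f = f - l ≫ colimit.ι S.X₂ j :=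
    ⟨hSc.exact.lift _ hfl, hSc.exact.lift_f _ _⟩
  obtain ⟨k, m, rfl⟩ : ∃ (k : J) (m : M ⟶ S.X₁.obj k), m ≫ colimit.ι S.X₁ k = d :=
    exists_hom_of_preservesColimit_coyoneda (colimit.isColimit S.X₁) d
  rw [Category.assoc, ι_colimMap] at hd
  refine ⟨IsFiltered.max j k, l ≫ S.X₂.map (IsFiltered.leftToMax j k) +
    m ≫ S.f.app k ≫ S.X₂.map (IsFiltered.rightToMax j k), ?_⟩
  simp only [Preadditive.add_comp, Category.assoc, colimit.w, hd, add_sub_cancel]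

theorem preservesColimit_coyoneda_of_shortExact (hS : S.ShortExact)
    [PreservesColimit S.X₁ (coyoneda.obj (op M))] [PreservesColimit S.X₃ (coyoneda.obj (op M))]
    (hExt : ExtColimitMapInjective M 1 (colimit.cocone S.X₁)) :
    PreservesColimit S.X₂ (coyoneda.obj (op M)) :=
  preservesColimit_coyoneda_of_exists (colimit.isColimit S.X₂)
    (exists_comp_ι_eq_of_shortExact hS hExt)
    fun _ ↦ exists_comp_map_eq_zero_of_shortExact hS

end FilteredColimit

namespace IsTorsionPair

variable [Abelian C] {T F : C → Prop}

lemma hom_eq_zero (h : IsTorsionPair T F) {X Y : C} (hX : T X) (hY : F Y) (f : X ⟶ Y) : f = 0 :=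
  (h.torsion_iff X).1 hX Y hY f

variable (h : IsTorsionPair T F)

/-- A choice of the torsion sequence `0 ⟶ tX ⟶ X ⟶ (1:t)X ⟶ 0` of `X`. Its middle term is `X`
definitionally. -/
noncomputable def torsionSequence (X : C) : ShortComplex C :=
  .mk _ _ (h.exists_seq X).choose_spec.choose_spec.choose_spec.choose_spec.choose

lemma torsionSequence_spec (X : C) : T (h.torsionSequence X).X₁ ∧ F (h.torsionSequence X).X₃ ∧
    (h.torsionSequence X).ShortExact :=
  (h.exists_seq X).choose_spec.choose_spec.choose_spec.choose_spec.choose_spec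

lemma shortExact_torsionSequence (X : C) : (h.torsionSequence X).ShortExact :=
  (h.torsionSequence_spec X).2.2

/-- The torsion sequence as a functor of its middle term, combining the torsion radical `t` and
the coradical `(1:t)`. -/
noncomputable def torsionSequenceFunctor : C ⥤ ShortComplex C where
  obj := h.torsionSequence
  map {X Y} f :=
    shortComplexHomOfMiddle (h.shortExact_torsionSequence X) (h.shortExact_torsionSequence Y) f
      (h.hom_eq_zero (h.torsionSequence_spec X).1 (h.torsionSequence_spec Y).2.1 _)
  map_id X :=
    have := (h.shortExact_torsionSequence X).epi_g
    have := (h.shortExact_torsionSequence X).mono_f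
    shortComplex_hom_ext_of_τ₂ rfl
  map_comp {X _ Z} _ _ :=
    have := (h.shortExact_torsionSequence X).epi_g
    have := (h.shortExact_torsionSequence Z).mono_f
    shortComplex_hom_ext_of_τ₂ rfl

variable {J : Type*} [Category* J] (D : J ⥤ C)

/-- The sequence of diagrams `0 ⟶ tD ⟶ D ⟶ (1:t)D ⟶ 0`, with middle term `D` definitionally. -/
noncomputable def torsionSequenceDiagram : ShortComplex (J ⥤ C) :=
  (ShortComplex.functorEquivalence J C).inverse.obj (D ⋙ h.torsionSequenceFunctor)

lemma torsion_torsionSequenceDiagram_X₁ (j : J) : T ((h.torsionSequenceDiagram D).X₁.obj j) :=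
  (h.torsionSequence_spec (D.obj j)).1

lemma torsionFree_torsionSequenceDiagram_X₃ (j : J) :
    F ((h.torsionSequenceDiagram D).X₃.obj j) :=
  (h.torsionSequence_spec (D.obj j)).2.1

lemma shortExact_torsionSequenceDiagram : (h.torsionSequenceDiagram D).ShortExact :=
  shortExact_of_shortExact_evaluation fun j ↦ h.shortExact_torsionSequence (D.obj j)

end IsTorsionPair

theorem finitelyPresented_of_torsion_criteria_general
    [Abelian C] [HasFilteredColimits C] [AB5 C] [HasExt.{w} C]
    {T F : C → Prop} (htp : IsTorsionPair T F) (M : C)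
    (h₁ : HomPreservesDirectLimitsOf T M)
    (h₂ : HomPreservesDirectLimitsOf F M)
    (h₃ : ∀ (J : Type v) [SmallCategory J] [IsFiltered J] (D : J ⥤ C),
      (∀ j : J, T (D.obj j)) → ∀ (c : Cocone D), IsColimit c → ExtColimitMapInjective M 1 c) :
    FinitelyPresented M := by
  intro J _ _ D c ⟨hc⟩
  let S := htp.torsionSequenceDiagram D
  have hT : ∀ j, T (S.X₁.obj j) := htp.torsion_torsionSequenceDiagram_X₁ D
  have hF : ∀ j, F (S.X₃.obj j) := htp.torsionFree_torsionSequenceDiagram_X₃ D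
  have : PreservesColimit S.X₁ (coyoneda.obj (op M)) := ⟨h₁ J S.X₁ hT _⟩
  have : PreservesColimit S.X₃ (coyoneda.obj (op M)) := ⟨h₂ J S.X₃ hF _⟩
  have : PreservesColimit D (coyoneda.obj (op M)) :=
    preservesColimit_coyoneda_of_shortExact (htp.shortExact_torsionSequenceDiagram D)
      (h₃ J S.X₁ hT _ (colimit.isColimit S.X₁))
  exact ⟨isColimitOfPreserves _ hc⟩

theorem finitelyPresented_of_torsion_criteria
    [Abelian C] [HasColimits C] [AB5 C] [HasExt.{w} C]
    (hsep : ∃ G : C, IsSeparator G)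
    (T F : C → Prop) (htp : IsTorsionPair T F)
    (hft : ClosedUnderDirectLimits F)
    (M : C)
    (h₁ : HomPreservesDirectLimitsOf T M)
    (h₂ : HomPreservesDirectLimitsOf F M)
    (h₃ : ∀ (J : Type v) [SmallCategory J] [IsFiltered J] (D : J ⥤ C),
      (∀ j : J, T (D.obj j)) →
      ∀ (c : Cocone D), IsColimit c →
      ∀ (i : J) (e : Ext M (D.obj i) 1),
        e.comp (Ext.mk₀ (c.ι.app i)) (add_zero 1) = 0 →
        ∃ (j : J) (φ : i ⟶ j), e.comp (Ext.mk₀ (D.map φ)) (add_zero 1) = 0) :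
    FinitelyPresented M :=
  finitelyPresented_of_torsion_criteria_general htp M h₁ h₂ h₃
end
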